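/- arXiv:2503.08801 — 3 statements merged into one kernel-verified Lean document; each statement's English description precedes it below -/
import Mathlib

section
/- For every x with |x| < 1, the series Σ_{k=0}^{∞} (c_k/(2k+1))·((√π/2)·x)^{2k+1} converges to a real number y satisfying erf(y) = x. (That is, the series is the Maclaurin expansion of the inverse error function, convergent on the whole open interval (−1,1).) -/
/-!
Let `E y = ∫₀^y exp (-t²) dt`, `H z = ∑ c_k z^(2k)`, `f z = ∑ c_k/(2k+1) z^(2k+1)` and
`P z = ∑ c_k/((k+1)(2k+1)) z^(2k+2)`, so that formally `f' = H` and `P' = 2 f`. The recursion for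
`c_k` says `H = 1 + P H`. One expects `f (E y) = y`, `H (E y) = exp (y²)` and
`P (E y) = 1 - exp (-y²)`.

*Convergence.* As all coefficients are nonnegative, the partial sums satisfy
`H_n (E y) ≤ exp (y²)` for `y ≥ 0` by induction on `n`: integrating the bound along `E` gives
`f_n (E y) ≤ y`, integrating again gives `P_n (E y) ≤ 1 - exp (-y²)`, and then
`H_(n+1) ≤ 1 + P_n H_n ≤ exp (y²)`. Since `E` maps `[0, ∞)` onto `[0, √π/2)`, the series converge
for `|z| < √π/2`.

*Inversion.* There `exp (f²) (1 - P)` has derivative `2 f exp (f²) (H (1 - P) - 1) = 0`, so it is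
constantly `1`. Therefore `(E ∘ f)' = exp (-f²) H = (1 - P) H = 1`, that is `E (f z) = z`.
-/

open Finset

/-- The error function `erf x = (2/√π) ∫₀ˣ exp (-t²) dt`. -/
noncomputable def erf (x : ℝ) : ℝ :=
  (2 / Real.sqrt Real.pi) * ∫ t in (0 : ℝ)..x, Real.exp (-t ^ 2)

/-- Maclaurin coefficients of the inverse error function. -/
noncomputable def invErfCoeff : ℕ → ℝ
  | 0 => 1
  | k + 1 => ∑ m ∈ (Finset.range (k + 1)).attach,
      invErfCoeff m.1 * invErfCoeff (k - m.1) / ((m.1 + 1) * (2 * m.1 + 1))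
decreasing_by
  · have := Finset.mem_range.mp m.2; omega
  · have := Finset.mem_range.mp m.2; omega

open Metric Real Set

theorem sum_range_sum_range_mul_le {R : Type*} [Semiring R] [PartialOrder R] [IsOrderedRing R]
    {a b : ℕ → R} (ha : ∀ k, 0 ≤ a k) (hb : ∀ k, 0 ≤ b k) (n : ℕ) :
    ∑ k ∈ range n, ∑ m ∈ range (k + 1), a m * b (k - m) ≤
      (∑ k ∈ range n, a k) * ∑ k ∈ range n, b k := by
  rw [sum_range_diag_flip n fun m j ↦ a m * b j, sum_mul_sum]
  gcongr with m
  · exact fun j _ _ ↦ mul_nonneg (ha m) (hb j)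
  · exact Nat.sub_le n m

theorem le_of_hasDerivAt_le {f g f' g' : ℝ → ℝ} {a x : ℝ}
    (hf : ∀ t ≥ a, HasDerivAt f (f' t) t) (hg : ∀ t ≥ a, HasDerivAt g (g' t) t)
    (ha : f a ≤ g a) (hle : ∀ t ≥ a, f' t ≤ g' t) (hx : a ≤ x) : f x ≤ g x :=
  image_le_of_deriv_right_le_deriv_boundary
    (fun t ht ↦ (hf t ht.1).continuousAt.continuousWithinAt)
    (fun t ht ↦ (hf t ht.1).hasDerivWithinAt) ha
    (fun t ht ↦ (hg t ht.1).continuousAt.continuousWithinAt)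
    (fun t ht ↦ (hg t ht.1).hasDerivWithinAt) (fun t ht ↦ hle t ht.1) ⟨hx, le_rfl⟩

theorem eqOn_ball_of_hasDerivAt {𝕜 G : Type*} [RCLike 𝕜] [NormedAddCommGroup G]
    [NormedSpace 𝕜 G] {f g f' : 𝕜 → G} {c : 𝕜} {R : ℝ}
    (hf : ∀ w ∈ ball c R, HasDerivAt f (f' w) w) (hg : ∀ w ∈ ball c R, HasDerivAt g (f' w) w)
    (hc : f c = g c) : EqOn f g (ball c R) := fun _ hz ↦
  isOpen_ball.eqOn_of_deriv_eq (convex_ball c R).isPreconnected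
    (fun w hw ↦ (hf w hw).differentiableAt.differentiableWithinAt)
    (fun w hw ↦ (hg w hw).differentiableAt.differentiableWithinAt)
    (fun w hw ↦ (hf w hw).deriv.trans (hg w hw).deriv.symm)
    (mem_ball_self (pos_of_mem_ball hz)) hc hz

theorem exists_mem_ball_zero_of_mem_ball_zero {E : Type*} [SeminormedAddGroup E] {z : E} {R : ℝ}
    (hz : z ∈ ball 0 R) : ∃ r ∈ ball (0 : ℝ) R, z ∈ ball 0 r := by
  obtain ⟨r, hrR, hzr⟩ := exists_lt_mem_ball_of_mem_ball hz
  refine ⟨r, ?_, hzr⟩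
  rwa [mem_ball_zero_iff, norm_of_nonneg (pos_of_mem_ball hzr).le]

theorem hasDerivAt_div_mul_pow_succ {𝕜 : Type*} [NontriviallyNormedField 𝕜] [CharZero 𝕜]
    (a : 𝕜) (n : ℕ) (z : 𝕜) :
    HasDerivAt (fun w ↦ a / (n + 1) * w ^ (n + 1)) (a * z ^ n) z := by
  refine ((hasDerivAt_pow (n + 1) z).const_mul (a / (n + 1))).congr_deriv ?_
  have : (n + 1 : 𝕜) ≠ 0 := n.cast_add_one_ne_zero
  push_cast
  field_simp

section TermwisePrimitive

variable {ι 𝕜 : Type*} [RCLike 𝕜] {a : ι → 𝕜} {e : ι → ℕ}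

theorem summable_div_mul_pow_succ {z : 𝕜} (h : Summable fun i ↦ a i * z ^ e i) :
    Summable fun i ↦ a i / (e i + 1) * z ^ (e i + 1) := by
  refine .of_norm_bounded (h.norm.mul_right ‖z‖) fun i ↦ ?_
  have hden : 1 ≤ ‖(e i + 1 : 𝕜)‖ := by
    rw [← Nat.cast_add_one, RCLike.norm_natCast]
    simp
  rw [pow_succ, norm_mul, norm_mul, norm_mul, norm_div, mul_assoc]
  gcongr
  exact div_le_self (norm_nonneg _) hden

theorem hasDerivAt_tsum_div_mul_pow_succ {r : ℝ} (h : Summable fun i ↦ ‖a i‖ * r ^ e i) {z : 𝕜}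
    (hz : z ∈ ball 0 r) :
    HasDerivAt (fun w ↦ ∑' i, a i / (e i + 1) * w ^ (e i + 1)) (∑' i, a i * z ^ e i) z := by
  refine hasDerivAt_tsum_of_isPreconnected h isOpen_ball (convex_ball 0 r).isPreconnected
    (fun i w _ ↦ hasDerivAt_div_mul_pow_succ (a i) (e i) w) (fun i w hw ↦ ?_)
    (mem_ball_self (pos_of_mem_ball hz)) (by simp) hz
  rw [norm_mul, norm_pow]
  have := (mem_ball_zero_iff.mp hw).le
  gcongr

end TermwisePrimitive

/-- The unnormalised error function `∫₀^y exp (-t²) dt`, called `E` in the introduction. -/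
noncomputable def gaussInt (y : ℝ) : ℝ := ∫ t in (0 : ℝ)..y, exp (-t ^ 2)

theorem gaussInt_zero : gaussInt 0 = 0 := intervalIntegral.integral_same

theorem hasDerivAt_gaussInt (y : ℝ) : HasDerivAt gaussInt (exp (-y ^ 2)) y :=
  ((by fun_prop : Continuous fun t : ℝ ↦ exp (-t ^ 2)).integral_hasStrictDerivAt 0 y).hasDerivAt

theorem continuous_gaussInt : Continuous gaussInt :=
  continuous_iff_continuousAt.mpr fun y ↦ (hasDerivAt_gaussInt y).continuousAt

theorem tendsto_gaussInt_atTop : Filter.Tendsto gaussInt .atTop (nhds (√π / 2)) := by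
  have hint : MeasureTheory.IntegrableOn (fun t : ℝ ↦ exp (-t ^ 2)) (Ioi 0) := by
    simpa using (integrable_exp_neg_mul_sq one_pos).integrableOn
  have hval : ∫ t in Ioi (0 : ℝ), exp (-t ^ 2) = √π / 2 := by simpa using integral_gaussian_Ioi 1
  exact hval ▸ MeasureTheory.intervalIntegral_tendsto_integral_Ioi 0 hint Filter.tendsto_id

theorem surjOn_gaussInt : SurjOn gaussInt (Ici 0) (Ico 0 (√π / 2)) := by
  have := isPreconnected_Ici.intermediate_value_Ico self_mem_Ici
    (Filter.le_principal_iff.mpr (Filter.Ici_mem_atTop 0)) continuous_gaussInt.continuousOn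
    tendsto_gaussInt_atTop
  rwa [gaussInt_zero] at this

theorem invErfCoeff_zero : invErfCoeff 0 = 1 := by rw [invErfCoeff]

theorem invErfCoeff_succ (k : ℕ) :
    invErfCoeff (k + 1) = ∑ m ∈ range (k + 1),
      invErfCoeff m * invErfCoeff (k - m) / ((m + 1) * (2 * m + 1)) := by
  rw [invErfCoeff, sum_attach (range (k + 1)) fun m : ℕ ↦
    invErfCoeff m * invErfCoeff (k - m) / ((m + 1) * (2 * m + 1))]

theorem invErfCoeff_nonneg (k : ℕ) : 0 ≤ invErfCoeff k := by
  induction k using Nat.strong_induction_on with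
  | _ k ih =>
    cases k with
    | zero => exact invErfCoeff_zero ▸ zero_le_one
    | succ k =>
      rw [invErfCoeff_succ]
      refine sum_nonneg fun m hm ↦ ?_
      have hm_nonneg := ih m (mem_range.mp hm)
      have hsub_nonneg := ih (k - m) (by lia)
      positivity

/-- The terms of the Maclaurin series `f` of the inverse of `gaussInt`. -/
noncomputable def invErfTerm (k : ℕ) (z : ℝ) : ℝ :=
  invErfCoeff k / (2 * k + 1) * z ^ (2 * k + 1)

/-- The terms of `H = f'`, the derivatives of `invErfTerm`. -/
noncomputable def invErfDerivTerm (k : ℕ) (z : ℝ) : ℝ := invErfCoeff k * z ^ (2 * k)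

/-- The terms of `P`, the primitives of `2 * invErfTerm`; the factor `2` makes them the weights in
the recursion for the coefficients, see `invErfDerivTerm_succ`. -/
noncomputable def invErfPrimTerm (k : ℕ) (z : ℝ) : ℝ :=
  invErfCoeff k / ((k + 1) * (2 * k + 1)) * z ^ (2 * k + 2)

-- Here and below the casts exhibit the shape `a / (e + 1) * z ^ (e + 1)` of
-- `hasDerivAt_div_mul_pow_succ`, with `e = 2 * k` and `e = 2 * k + 1`.
theorem invErfTerm_eq_div_mul_pow_succ (k : ℕ) (z : ℝ) :
    invErfTerm k z = invErfCoeff k / ((2 * k : ℕ) + 1) * z ^ (2 * k + 1) := by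
  simp [invErfTerm]

theorem invErfPrimTerm_eq_div_mul_pow_succ (k : ℕ) (z : ℝ) :
    invErfPrimTerm k z =
      2 * (invErfCoeff k / (2 * k + 1)) / ((2 * k + 1 : ℕ) + 1) * z ^ (2 * k + 1 + 1) := by
  rw [invErfPrimTerm]
  push_cast
  field_simp
  ring

theorem two_mul_invErfTerm (k : ℕ) (z : ℝ) :
    2 * invErfTerm k z = 2 * (invErfCoeff k / (2 * k + 1)) * z ^ (2 * k + 1) := by
  rw [invErfTerm, mul_assoc]

theorem invErfTerm_zero_right (k : ℕ) : invErfTerm k 0 = 0 := by simp [invErfTerm]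

theorem invErfPrimTerm_zero_right (k : ℕ) : invErfPrimTerm k 0 = 0 := by simp [invErfPrimTerm]

theorem invErfDerivTerm_nonneg (k : ℕ) (z : ℝ) : 0 ≤ invErfDerivTerm k z :=
  mul_nonneg (invErfCoeff_nonneg k) ((even_two_mul k).pow_nonneg z)

theorem invErfPrimTerm_nonneg (k : ℕ) (z : ℝ) : 0 ≤ invErfPrimTerm k z :=
  mul_nonneg (div_nonneg (invErfCoeff_nonneg k) (by positivity))
    (Even.pow_nonneg ⟨k + 1, by ring⟩ z)

theorem hasDerivAt_invErfTerm (k : ℕ) (z : ℝ) :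
    HasDerivAt (invErfTerm k) (invErfDerivTerm k z) z := by
  rw [funext (invErfTerm_eq_div_mul_pow_succ k)]
  exact hasDerivAt_div_mul_pow_succ _ (2 * k) z

theorem hasDerivAt_invErfPrimTerm (k : ℕ) (z : ℝ) :
    HasDerivAt (invErfPrimTerm k) (2 * invErfTerm k z) z := by
  rw [funext (invErfPrimTerm_eq_div_mul_pow_succ k), two_mul_invErfTerm]
  exact hasDerivAt_div_mul_pow_succ _ (2 * k + 1) z

theorem invErfDerivTerm_zero (z : ℝ) : invErfDerivTerm 0 z = 1 := by
  simp [invErfDerivTerm, invErfCoeff_zero]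

theorem invErfDerivTerm_succ (k : ℕ) (z : ℝ) :
    invErfDerivTerm (k + 1) z =
      ∑ m ∈ range (k + 1), invErfPrimTerm m z * invErfDerivTerm (k - m) z := by
  rw [invErfDerivTerm, invErfCoeff_succ, sum_mul]
  refine sum_congr rfl fun m hm ↦ ?_
  have hexp : 2 * (k + 1) = (2 * m + 2) + 2 * (k - m) := by grind
  rw [invErfPrimTerm, invErfDerivTerm, hexp, pow_add]
  ring

theorem sum_range_succ_invErfDerivTerm_le (n : ℕ) (z : ℝ) :
    ∑ k ∈ range (n + 1), invErfDerivTerm k z ≤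
      1 + (∑ k ∈ range n, invErfPrimTerm k z) * ∑ k ∈ range n, invErfDerivTerm k z := by
  rw [sum_range_succ', invErfDerivTerm_zero, add_comm]
  simp only [invErfDerivTerm_succ]
  gcongr
  exact sum_range_sum_range_mul_le (invErfPrimTerm_nonneg · z) (invErfDerivTerm_nonneg · z) n

theorem sum_invErfTerm_gaussInt_le {s : Finset ℕ}
    (h : ∀ y ≥ 0, ∑ k ∈ s, invErfDerivTerm k (gaussInt y) ≤ exp (y ^ 2)) {y : ℝ} (hy : 0 ≤ y) :
    ∑ k ∈ s, invErfTerm k (gaussInt y) ≤ y := by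
  refine le_of_hasDerivAt_le (a := 0)
    (fun t _ ↦ HasDerivAt.fun_sum fun k _ ↦
      (hasDerivAt_invErfTerm k (gaussInt t)).comp t (hasDerivAt_gaussInt t))
    (fun t _ ↦ hasDerivAt_id t) (by simp [gaussInt_zero, invErfTerm_zero_right])
    (fun t ht ↦ ?_) hy
  calc ∑ k ∈ s, invErfDerivTerm k (gaussInt t) * exp (-t ^ 2)
      = (∑ k ∈ s, invErfDerivTerm k (gaussInt t)) * exp (-t ^ 2) := (sum_mul ..).symm
    _ ≤ exp (t ^ 2) * exp (-t ^ 2) := by gcongr; exact h t ht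
    _ = 1 := by rw [← exp_add, add_neg_cancel, exp_zero]

theorem sum_invErfPrimTerm_gaussInt_le {s : Finset ℕ}
    (h : ∀ y ≥ 0, ∑ k ∈ s, invErfTerm k (gaussInt y) ≤ y) {y : ℝ} (hy : 0 ≤ y) :
    ∑ k ∈ s, invErfPrimTerm k (gaussInt y) ≤ 1 - exp (-y ^ 2) := by
  have hderiv (t : ℝ) : HasDerivAt (fun t ↦ 1 - exp (-t ^ 2)) (2 * t * exp (-t ^ 2)) t :=
    ((hasDerivAt_pow 2 t).fun_neg.exp.const_sub 1).congr_deriv (by ring)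
  refine le_of_hasDerivAt_le (a := 0)
    (fun t _ ↦ HasDerivAt.fun_sum fun k _ ↦
      (hasDerivAt_invErfPrimTerm k (gaussInt t)).comp t (hasDerivAt_gaussInt t))
    (fun t _ ↦ hderiv t) (by simp [gaussInt_zero, invErfPrimTerm_zero_right]) (fun t ht ↦ ?_) hy
  rw [← sum_mul, ← mul_sum]
  gcongr
  exact h t ht

theorem sum_range_invErfDerivTerm_gaussInt_le (n : ℕ) {y : ℝ} (hy : 0 ≤ y) :
    ∑ k ∈ range n, invErfDerivTerm k (gaussInt y) ≤ exp (y ^ 2) := by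
  induction n generalizing y with
  | zero => simpa using (exp_pos (y ^ 2)).le
  | succ n ih =>
    have hprim : ∑ k ∈ range n, invErfPrimTerm k (gaussInt y) ≤ 1 - exp (-y ^ 2) :=
      sum_invErfPrimTerm_gaussInt_le
        (fun _ ↦ sum_invErfTerm_gaussInt_le fun _ ↦ ih) hy
    calc ∑ k ∈ range (n + 1), invErfDerivTerm k (gaussInt y)
        ≤ 1 + (∑ k ∈ range n, invErfPrimTerm k (gaussInt y)) *
            ∑ k ∈ range n, invErfDerivTerm k (gaussInt y) :=
          sum_range_succ_invErfDerivTerm_le n _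
      _ ≤ 1 + (1 - exp (-y ^ 2)) * exp (y ^ 2) := by
          gcongr
          · exact sum_nonneg fun k _ ↦ invErfDerivTerm_nonneg k _
          · exact (sum_nonneg fun k _ ↦ invErfPrimTerm_nonneg k _).trans hprim
          · exact ih hy
      _ = exp (y ^ 2) := by rw [sub_mul, ← exp_add, neg_add_cancel, exp_zero]; ring

section Ball

variable {z : ℝ}

theorem summable_invErfDerivTerm (hz : z ∈ ball 0 (√π / 2)) :
    Summable (invErfDerivTerm · z) := by
  obtain ⟨y, hy, hyz⟩ := surjOn_gaussInt ⟨abs_nonneg z, mem_ball_zero_iff.mp hz⟩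
  have h : Summable (invErfDerivTerm · |z|) := hyz ▸ summable_of_sum_range_le
    (invErfDerivTerm_nonneg · _) (sum_range_invErfDerivTerm_gaussInt_le · hy)
  simpa only [invErfDerivTerm, (even_two_mul _).pow_abs] using h

theorem summable_invErfTerm (hz : z ∈ ball 0 (√π / 2)) : Summable (invErfTerm · z) := by
  simp only [invErfTerm_eq_div_mul_pow_succ]
  exact summable_div_mul_pow_succ (summable_invErfDerivTerm hz)

theorem summable_invErfPrimTerm (hz : z ∈ ball 0 (√π / 2)) : Summable (invErfPrimTerm · z) := by
  simp only [invErfPrimTerm_eq_div_mul_pow_succ]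
  refine summable_div_mul_pow_succ (e := fun k ↦ 2 * k + 1) ?_
  simpa only [two_mul_invErfTerm] using (summable_invErfTerm hz).mul_left 2

theorem tsum_invErfDerivTerm_mul_one_sub (hz : z ∈ ball 0 (√π / 2)) :
    (∑' k, invErfDerivTerm k z) * (1 - ∑' k, invErfPrimTerm k z) = 1 := by
  have hH := summable_invErfDerivTerm hz
  have hrenewal : ∑' k, invErfDerivTerm k z =
      1 + (∑' k, invErfPrimTerm k z) * ∑' k, invErfDerivTerm k z := by
    rw [tsum_mul_tsum_eq_tsum_sum_range_of_summable_norm (summable_invErfPrimTerm hz).norm hH.norm,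
      hH.tsum_eq_zero_add, invErfDerivTerm_zero]
    simp only [invErfDerivTerm_succ]
  linear_combination hrenewal

theorem hasDerivAt_tsum_invErfTerm (hz : z ∈ ball 0 (√π / 2)) :
    HasDerivAt (fun w ↦ ∑' k, invErfTerm k w) (∑' k, invErfDerivTerm k z) z := by
  obtain ⟨r, hr, hzr⟩ := exists_mem_ball_zero_of_mem_ball_zero hz
  simp only [invErfTerm_eq_div_mul_pow_succ]
  refine hasDerivAt_tsum_div_mul_pow_succ ?_ hzr
  simpa only [norm_of_nonneg (invErfCoeff_nonneg _), invErfDerivTerm]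
    using summable_invErfDerivTerm hr

theorem hasDerivAt_tsum_invErfPrimTerm (hz : z ∈ ball 0 (√π / 2)) :
    HasDerivAt (fun w ↦ ∑' k, invErfPrimTerm k w) (2 * ∑' k, invErfTerm k z) z := by
  obtain ⟨r, hr, hzr⟩ := exists_mem_ball_zero_of_mem_ball_zero hz
  simp only [invErfPrimTerm_eq_div_mul_pow_succ, ← tsum_mul_left, two_mul_invErfTerm]
  refine hasDerivAt_tsum_div_mul_pow_succ (e := fun k ↦ 2 * k + 1) ?_ hzr
  have hcoeff (k : ℕ) : 0 ≤ 2 * (invErfCoeff k / (2 * k + 1)) := by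
    have := invErfCoeff_nonneg k
    positivity
  simpa only [norm_of_nonneg (hcoeff _), two_mul_invErfTerm]
    using (summable_invErfTerm hr).mul_left 2

theorem exp_neg_tsum_invErfTerm_sq (hz : z ∈ ball 0 (√π / 2)) :
    exp (-(∑' k, invErfTerm k z) ^ 2) = 1 - ∑' k, invErfPrimTerm k z := by
  have hconst : exp ((∑' k, invErfTerm k z) ^ 2) * (1 - ∑' k, invErfPrimTerm k z) = 1 := by
    refine eqOn_ball_of_hasDerivAt (f := fun w ↦ exp ((∑' k, invErfTerm k w) ^ 2) *
      (1 - ∑' k, invErfPrimTerm k w)) (f' := 0) (fun w hw ↦ ?_)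
      (fun w _ ↦ hasDerivAt_const w 1)
      (by simp [invErfTerm_zero_right, invErfPrimTerm_zero_right]) hz
    refine (((hasDerivAt_tsum_invErfTerm hw).fun_pow 2).exp.mul
      ((hasDerivAt_tsum_invErfPrimTerm hw).const_sub 1)).congr_deriv ?_
    simp only [Pi.zero_apply]
    linear_combination (exp ((∑' k, invErfTerm k w) ^ 2) * (2 * ∑' k, invErfTerm k w)) *
      tsum_invErfDerivTerm_mul_one_sub hw
  rw [exp_neg, inv_eq_of_mul_eq_one_right hconst]

theorem gaussInt_tsum_invErfTerm (hz : z ∈ ball 0 (√π / 2)) :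
    gaussInt (∑' k, invErfTerm k z) = z := by
  refine eqOn_ball_of_hasDerivAt (f := fun w ↦ gaussInt (∑' k, invErfTerm k w)) (f' := 1)
    (fun w hw ↦ ?_) (fun w _ ↦ hasDerivAt_id w) (by simp [invErfTerm_zero_right, gaussInt_zero]) hz
  refine ((hasDerivAt_gaussInt _).comp w (hasDerivAt_tsum_invErfTerm hw)).congr_deriv ?_
  rw [exp_neg_tsum_invErfTerm_sq hw, mul_comm, tsum_invErfDerivTerm_mul_one_sub hw, Pi.one_apply]

end Ball

/-- On `(-1,1)` the Maclaurin series of the inverse error function converges, and its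
sum `y` satisfies `erf y = x`. -/
theorem invErf_series_hasSum (x : ℝ) (hx : |x| < 1) :
    ∃ y : ℝ,
      HasSum (fun k : ℕ =>
        (invErfCoeff k / (2 * k + 1)) * ((Real.sqrt Real.pi / 2) * x) ^ (2 * k + 1)) y ∧
      erf y = x := by
  have hz : √π / 2 * x ∈ ball 0 (√π / 2) := by
    rw [mem_ball_zero_iff, norm_mul, norm_of_nonneg (by positivity)]
    exact mul_lt_of_lt_one_right (by positivity) hx
  refine ⟨∑' k, invErfTerm k (√π / 2 * x), (summable_invErfTerm hz).hasSum, ?_⟩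
  calc erf (∑' k, invErfTerm k (√π / 2 * x))
      = 2 / √π * gaussInt (∑' k, invErfTerm k (√π / 2 * x)) := rfl
    _ = 2 / √π * (√π / 2 * x) := by rw [gaussInt_tsum_invErfTerm hz]
    _ = x := by field_simp
end

section
/- Let f : ℝ^d → ℝ^m be L-Lipschitz (with the Euclidean norm on both spaces) with L > 0, let x ∈ ℝ^d, let y ∈ {1,…,m} and suppose the prediction margin M := f(x)_y − max_{i ≠ y} f(x)_i is positive. Then for every perturbation τ ∈ ℝ^d with ‖τ‖₂ < M/(√2·L) and every i ≠ y, one has f(x+τ)_y > f(x+τ)_i; in particular arg max_k f(x+τ)_k = y. (Hence the certified radius satisfies R(f,x) ≥ M(f,x)/(√2·L).) -/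
open Finset

/-! A difference of two coordinates is the inner product with `e_i - e_j`, a vector of norm `√2`,
so the margin, a minimum of such differences, is `√2`-Lipschitz in the vector of scores. Along an
`L`-Lipschitz `f` it is therefore `√2 L`-Lipschitz in the input, and it cannot fall to `0` within
distance `M / (√2 L)` of a point where it equals `M`. -/

lemma norm_apply_sub_apply_le_sqrt_two_mul_norm {ι E : Type*} [Fintype ι]
    [SeminormedAddCommGroup E] (v : PiLp 2 fun _ : ι => E) (i j : ι) :
    ‖v i - v j‖ ≤ √2 * ‖v‖ := by
  classical
  obtain rfl | hij := eq_or_ne i j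
  · rw [sub_self, norm_zero]
    positivity
  have hpair : ‖v i‖ ^ 2 + ‖v j‖ ^ 2 ≤ ‖v‖ ^ 2 := by
    rw [PiLp.norm_sq_eq_of_L2, ← sum_pair (f := fun k => ‖v k‖ ^ 2) hij]
    exact sum_le_univ_sum_of_nonneg fun k => sq_nonneg ‖v k‖
  refine le_of_sq_le_sq ?_ (by positivity)
  calc ‖v i - v j‖ ^ 2 ≤ (‖v i‖ + ‖v j‖) ^ 2 := by gcongr; exact norm_sub_le _ _
    _ ≤ 2 * (‖v i‖ ^ 2 + ‖v j‖ ^ 2) := add_sq_le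
    _ ≤ 2 * ‖v‖ ^ 2 := by gcongr
    _ = (√2 * ‖v‖) ^ 2 := by rw [mul_pow, Real.sq_sqrt zero_le_two]

section PredictionMargin

variable {ι : Type*} [Fintype ι] [DecidableEq ι] [Nontrivial ι]

/-- The prediction margin of the class `y` under the scores `v`: the lead of `v y` over the best
competing score, so that `M(f, x)` is `predictionMargin (f x) y`. Nontriviality of `ι` provides a
competitor, without which the maximum would be over the empty set. -/
noncomputable def predictionMargin (v : ι → ℝ) (y : ι) : ℝ :=
  v y - (univ.erase y).sup' univ_nontrivial.erase_nonempty v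

lemma le_predictionMargin_iff {v : ι → ℝ} {y : ι} {c : ℝ} :
    c ≤ predictionMargin v y ↔ ∀ i, i ≠ y → c ≤ v y - v i := by
  simp [predictionMargin, le_sub_comm (a := c)]

lemma predictionMargin_le_sub (v : ι → ℝ) {i y : ι} (hi : i ≠ y) :
    predictionMargin v y ≤ v y - v i :=
  le_predictionMargin_iff.1 le_rfl i hi

lemma lipschitzWith_predictionMargin (y : ι) :
    LipschitzWith (NNReal.sqrt 2) fun v : EuclideanSpace ℝ ι => predictionMargin v y := by
  refine LipschitzWith.of_le_add_mul _ fun v w => ?_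
  rw [← sub_le_iff_le_add, le_predictionMargin_iff]
  intro i hi
  have hgap : predictionMargin v y ≤ v y - v i := predictionMargin_le_sub v hi
  have hchange : (v y - w y) - (v i - w i) ≤ √2 * dist v w := by
    rw [dist_eq_norm]
    exact (Real.le_norm_self _).trans (norm_apply_sub_apply_le_sqrt_two_mul_norm (v - w) y i)
  rw [Real.coe_sqrt, NNReal.coe_ofNat]
  linarith

theorem certified_radius_lipschitz_general {X : Type*} [PseudoMetricSpace X]
    {f : X → EuclideanSpace ℝ ι} {L : ℝ} (hL : 0 < L) {x : X}
    (hf : ∀ x', dist (f x) (f x') ≤ L * dist x x') {y : ι} {z : X}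
    (hz : dist x z < predictionMargin (f x) y / (√2 * L)) :
    ∀ i, i ≠ y → f z i < f z y := by
  have hdrop : predictionMargin (f x) y - predictionMargin (f z) y < predictionMargin (f x) y :=
    calc predictionMargin (f x) y - predictionMargin (f z) y
        ≤ √2 * dist (f x) (f z) := by
          simpa [add_comm] using
            (lipschitzWith_predictionMargin y).le_add_mul (f x) (f z)
      _ ≤ √2 * (L * dist x z) := by gcongr; exact hf z
      _ = dist x z * (√2 * L) := by ring
      _ < predictionMargin (f x) y := (lt_div_iff₀ (by positivity)).1 hz
  have hpos : 0 < predictionMargin (f z) y := by linarith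
  exact fun i hi => sub_pos.1 (hpos.trans_le (predictionMargin_le_sub (f z) hi))

end PredictionMargin

/-- If `f : ℝᵈ → ℝᵐ` is `L`-Lipschitz and the prediction margin
`M = f(x)_y - max_{i ≠ y} f(x)_i` is positive, then for every perturbation `τ` with
`‖τ‖₂ < M / (√2 L)`, the class `y` still strictly dominates every other class at `x + τ`;
hence the certified radius satisfies `R(f,x) ≥ M / (√2 L)`. -/
theorem certified_radius_lipschitz (d m : ℕ) (hm : 2 ≤ m)
    (f : EuclideanSpace ℝ (Fin d) → EuclideanSpace ℝ (Fin m))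
    (L : ℝ) (hL : 0 < L)
    (hf : ∀ x₁ x₂, ‖f x₁ - f x₂‖ ≤ L * ‖x₁ - x₂‖)
    (x : EuclideanSpace ℝ (Fin d)) (y : Fin m)
    (hne : (Finset.univ.erase y).Nonempty)
    (M : ℝ) (hM : M = f x y - (Finset.univ.erase y).sup' hne (fun i => f x i))
    (hMpos : 0 < M)
    (τ : EuclideanSpace ℝ (Fin d)) (hτ : ‖τ‖ < M / (Real.sqrt 2 * L)) :
    ∀ i, i ≠ y → f (x + τ) i < f (x + τ) y := by
  have : Nontrivial (Fin m) := Fin.nontrivial_iff_two_le.2 hm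
  subst hM
  exact certified_radius_lipschitz_general hL (fun x' => by simpa only [dist_eq_norm] using hf x x')
    (by rwa [dist_self_add_right])
end

section
/- Let σ > 0, d ≥ 1, and let f : ℝ^d → [0,1] be measurable. Define the Gaussian smoothing ĥ(x) = ∫_{ℝ^d} f(z)·(2πσ²)^{−d/2}·exp(−‖x−z‖²/(2σ²)) dz. Then x ↦ σ·Φ⁻¹(ĥ(x)) is 1-Lipschitz: for all x₁, x₂ ∈ ℝ^d and all u₁, u₂ ∈ ℝ with Φ(u₁) = ĥ(x₁) and Φ(u₂) = ĥ(x₂), one has u₁ − u₂ ≤ ‖x₁ − x₂‖/σ. -/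
/-!
After rescaling by `σ`, the smoothing at `x₁` is the mean of some `[0, 1]`-valued `g` under the
standard Gaussian `γ`, and the smoothing at `x₂` is the mean of `g` under the translate of `γ` by
`v = (x₂ - x₁) / σ`. By the Cameron–Martin formula, the translate has density
`exp (⟪v, w⟫ - ‖v‖ ^ 2 / 2)` with respect to `γ`, an increasing function of `⟪v, w⟫`. By the
Neyman–Pearson lemma, among all `g` whose mean under `γ` is at least `Φ u`, the mean under the
translate is smallest when `g` is the indicator of the half-space `{w | ⟪v, w⟫ ≤ ‖v‖ * u}`, and
there it equals `Φ (u - ‖v‖)`. Strict monotonicity of `Φ` concludes.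
-/

open MeasureTheory

/-- The standard normal cumulative distribution function. -/
noncomputable def stdNormalCDF (y : ℝ) : ℝ :=
  ∫ t in Set.Iic y, (1 / Real.sqrt (2 * Real.pi)) * Real.exp (-t ^ 2 / 2)

open ProbabilityTheory
open scoped RealInnerProductSpace

section NormalCDF

lemma strictMono_cdf (μ : Measure ℝ) [IsProbabilityMeasure μ] [μ.IsOpenPosMeasure] :
    StrictMono (cdf μ) := by
  intro a b hab
  rw [cdf_eq_real, cdf_eq_real, ← sub_pos,
    ← measureReal_sdiff (Set.Iic_subset_Iic.2 hab.le) measurableSet_Iic, Set.Iic_sdiff_Iic]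
  have hpos : 0 < μ (Set.Ioc a b) :=
    ((Measure.measure_Ioo_pos μ).2 hab).trans_le (measure_mono Set.Ioo_subset_Ioc_self)
  exact ENNReal.toReal_pos hpos.ne' (measure_ne_top _ _)

lemma stdNormalCDF_eq_cdf (y : ℝ) : stdNormalCDF y = cdf (gaussianReal 0 1) y := by
  rw [cdf_eq_real, measureReal_def, gaussianReal_apply_eq_integral 0 one_ne_zero,
    ENNReal.toReal_ofReal (integral_nonneg fun _ ↦ gaussianPDFReal_nonneg _ _ _)]
  simp [stdNormalCDF, gaussianPDFReal]

lemma stdNormalCDF_strictMono : StrictMono stdNormalCDF := by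
  have : (gaussianReal 0 1).IsOpenPosMeasure :=
    (gaussianReal_absolutelyContinuous' 0 one_ne_zero).isOpenPosMeasure
  simpa only [funext stdNormalCDF_eq_cdf] using strictMono_cdf (gaussianReal 0 1)

end NormalCDF

section NeymanPearson

variable {α : Type*} [MeasurableSpace α] {μ : Measure α} [IsFiniteMeasure μ]

lemma setIntegral_le_integral_mul_of_likelihoodRatio_le {φ L : α → ℝ} {S : Set α} {k : ℝ}
    (hφ : AEStronglyMeasurable φ μ) (hφ01 : ∀ᵐ w ∂μ, φ w ∈ Set.Icc (0 : ℝ) 1)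
    (hL : Integrable L μ) (hS : MeasurableSet S) (hk : 0 ≤ k)
    (hLk : ∀ w ∈ S, L w ≤ k) (hkL : ∀ w ∉ S, k ≤ L w) (hsize : μ.real S ≤ ∫ w, φ w ∂μ) :
    ∫ w in S, L w ∂μ ≤ ∫ w, φ w * L w ∂μ := by
  have hφ_bound : ∀ᵐ w ∂μ, ‖φ w‖ ≤ 1 := hφ01.mono fun w hw ↦ by
    rw [Real.norm_of_nonneg hw.1]; exact hw.2
  have hφ_int : Integrable φ μ := .of_bound hφ 1 hφ_bound
  have hφL_int : Integrable (fun w ↦ φ w * L w) μ := hL.bdd_mul hφ hφ_bound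
  -- A rearrangement of `0 ≤ (φ - 1_S) * (L - k)`, whose two factors have the same sign.
  have hpointwise : ∀ᵐ w ∂μ, S.indicator (fun w ↦ L w - k) w ≤ φ w * L w - k * φ w := by
    filter_upwards [hφ01] with w ⟨hφ0, hφ1⟩
    by_cases hw : w ∈ S
    · rw [Set.indicator_of_mem hw]
      nlinarith [hLk w hw]
    · rw [Set.indicator_of_notMem hw]
      nlinarith [hkL w hw]
  calc ∫ w in S, L w ∂μ
    _ = ∫ w, S.indicator (fun w ↦ L w - k) w ∂μ + k * μ.real S := by
      rw [integral_indicator hS, integral_sub hL.integrableOn (integrable_const k),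
        setIntegral_const, smul_eq_mul]
      ring
    _ ≤ ∫ w, (φ w * L w - k * φ w) ∂μ + k * ∫ w, φ w ∂μ := by
      refine add_le_add (integral_mono_ae ?_ ?_ hpointwise) (by gcongr)
      · exact (hL.sub (integrable_const k)).indicator hS
      · exact hφL_int.sub (hφ_int.const_mul k)
    _ = ∫ w, φ w * L w ∂μ := by
      rw [integral_sub hφL_int (hφ_int.const_mul k), integral_const_mul, sub_add_cancel]

end NeymanPearson

section StdGaussian

variable {E : Type*} [NormedAddCommGroup E] [InnerProductSpace ℝ E]

/-- The real-valued Lebesgue density of `stdGaussian E`, the analogue of `gaussianPDFReal 0 1`; see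
`stdGaussian_eq_withDensity`. -/
noncomputable def stdGaussianPDFReal (w : E) : ℝ :=
  (2 * Real.pi) ^ (-(Module.finrank ℝ E : ℝ) / 2) * Real.exp (-‖w‖ ^ 2 / 2)

lemma stdGaussianPDFReal_nonneg (w : E) : 0 ≤ stdGaussianPDFReal w := by
  unfold stdGaussianPDFReal; positivity

lemma stdGaussianPDFReal_sub (v w : E) :
    stdGaussianPDFReal (w - v) = Real.exp (⟪v, w⟫ - ‖v‖ ^ 2 / 2) * stdGaussianPDFReal w := by
  rw [stdGaussianPDFReal, stdGaussianPDFReal, mul_left_comm, ← Real.exp_add, norm_sub_sq_real,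
    real_inner_comm]
  congr 2
  ring

lemma abs_inv_pow_mul_stdGaussianPDFReal_inv_smul {σ : ℝ} (hσ : σ ≠ 0) (w : E) :
    |(σ ^ Module.finrank ℝ E)⁻¹| * stdGaussianPDFReal (σ⁻¹ • w) =
      (2 * Real.pi * σ ^ 2) ^ (-(Module.finrank ℝ E : ℝ) / 2) *
        Real.exp (-‖w‖ ^ 2 / (2 * σ ^ 2)) := by
  have hscale : (σ ^ 2) ^ (-(Module.finrank ℝ E : ℝ) / 2) = |(σ ^ Module.finrank ℝ E)⁻¹| := by
    rw [← sq_abs, ← Real.rpow_natCast_mul (abs_nonneg σ), Nat.cast_ofNat,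
      mul_div_cancel₀ _ two_ne_zero, Real.rpow_neg (abs_nonneg σ), Real.rpow_natCast, abs_inv,
      abs_pow]
  have hexponent : -‖σ⁻¹ • w‖ ^ 2 / 2 = -‖w‖ ^ 2 / (2 * σ ^ 2) := by
    rw [norm_smul, mul_pow, Real.norm_eq_abs, sq_abs]
    field_simp
  rw [stdGaussianPDFReal, hexponent, Real.mul_rpow (by positivity) (sq_nonneg σ), hscale]
  ring

variable [MeasurableSpace E] [BorelSpace E]

lemma measurable_stdGaussianPDFReal : Measurable (stdGaussianPDFReal : E → ℝ) := by
  unfold stdGaussianPDFReal; fun_prop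

variable [FiniteDimensional ℝ E]

lemma integral_stdGaussianPDFReal_smul_cexp (t : E) :
    ∫ w : E, stdGaussianPDFReal w • Complex.exp (⟪w, t⟫ * Complex.I)
      = Complex.exp (-‖t‖ ^ 2 / 2) := by
  have hgauss := GaussianFourier.integral_cexp_neg_mul_sq_norm_add (b := 1 / 2) (by norm_num)
    Complex.I t
  have hintegrand (w : E) : stdGaussianPDFReal w • Complex.exp (⟪w, t⟫ * Complex.I) =
      ((2 * Real.pi) ^ (-(Module.finrank ℝ E : ℝ) / 2) : ℝ) *
        Complex.exp (-(1 / 2) * ‖w‖ ^ 2 + Complex.I * ⟪t, w⟫) := by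
    rw [stdGaussianPDFReal, Complex.real_smul, Complex.ofReal_mul, mul_assoc, Complex.ofReal_exp,
      ← Complex.exp_add, real_inner_comm]
    congr 2
    push_cast
    ring
  have hnormalization : (((2 * Real.pi) ^ (-(Module.finrank ℝ E : ℝ) / 2) : ℝ) : ℂ) *
      (Real.pi / (1 / 2)) ^ (Module.finrank ℝ E / 2 : ℂ) = 1 := by
    rw [Complex.ofReal_cpow (by positivity), div_div_eq_mul_div, div_one, mul_comm (Real.pi : ℂ)]
    push_cast
    rw [← Complex.cpow_add _ _ (by simp [Real.pi_ne_zero]), neg_div, neg_add_cancel,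
      Complex.cpow_zero]
  simp_rw [hintegrand, integral_const_mul, hgauss]
  rw [← mul_assoc, hnormalization, one_mul, Complex.I_sq]
  congr 1
  ring

lemma integral_stdGaussianPDFReal : ∫ w : E, stdGaussianPDFReal w = 1 := by
  rw [← Complex.ofReal_inj, ← integral_complex_ofReal]
  simpa using integral_stdGaussianPDFReal_smul_cexp (0 : E)

lemma integrable_stdGaussianPDFReal : Integrable (stdGaussianPDFReal : E → ℝ) :=
  .of_integral_ne_zero (by simp [integral_stdGaussianPDFReal])

lemma stdGaussian_eq_withDensity :
    stdGaussian E = volume.withDensity fun w ↦ ENNReal.ofReal (stdGaussianPDFReal w) := by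
  have := isFiniteMeasure_withDensity_ofReal (integrable_stdGaussianPDFReal (E := E)).2
  refine Measure.ext_of_charFun (funext fun t ↦ ?_)
  rw [charFun_stdGaussian, charFun_apply, integral_withDensity_eq_integral_toReal_smul
    measurable_stdGaussianPDFReal.ennreal_ofReal (by simp)]
  simp_rw [ENNReal.toReal_ofReal (stdGaussianPDFReal_nonneg _),
    integral_stdGaussianPDFReal_smul_cexp]

variable {F : Type*} [NormedAddCommGroup F] [NormedSpace ℝ F]

lemma integral_stdGaussian_eq_integral_smul (g : E → F) :
    ∫ w, g w ∂stdGaussian E = ∫ w, stdGaussianPDFReal w • g w := by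
  rw [stdGaussian_eq_withDensity, integral_withDensity_eq_integral_toReal_smul
    measurable_stdGaussianPDFReal.ennreal_ofReal (by simp)]
  simp_rw [ENNReal.toReal_ofReal (stdGaussianPDFReal_nonneg _)]

lemma integral_comp_add_right_stdGaussian (g : E → F) (v : E) :
    ∫ w, g (w + v) ∂stdGaussian E
      = ∫ w, Real.exp (⟪v, w⟫ - ‖v‖ ^ 2 / 2) • g w ∂stdGaussian E := by
  simp_rw [integral_stdGaussian_eq_integral_smul, smul_smul]
  rw [← integral_sub_right_eq_self _ v]
  simp_rw [sub_add_cancel, stdGaussianPDFReal_sub, mul_comm]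

lemma integrable_exp_inner_sub_stdGaussian (v : E) :
    Integrable (fun w ↦ Real.exp (⟪v, w⟫ - ‖v‖ ^ 2 / 2)) (stdGaussian E) :=
  .of_integral_ne_zero <| by
    have htotal := integral_comp_add_right_stdGaussian (fun _ : E ↦ (1 : ℝ)) v
    simp only [smul_eq_mul, mul_one, integral_const, probReal_univ] at htotal
    exact htotal ▸ one_ne_zero

lemma stdGaussian_map_inner (v : E) :
    (stdGaussian E).map (fun w ↦ ⟪v, w⟫) = gaussianReal 0 (‖v‖₊ ^ 2) := by
  have hlaw := IsGaussian.map_eq_gaussianReal (μ := stdGaussian E) (innerSL ℝ v)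
  rw [integral_strongDual_stdGaussian, variance_dual_stdGaussian, innerSL_apply_norm] at hlaw
  convert! hlaw using 2
  ext
  simp

lemma stdGaussian_real_halfSpace {v : E} (hv : v ≠ 0) (u : ℝ) :
    (stdGaussian E).real {w | ⟪v, w⟫ ≤ ‖v‖ * u} = stdNormalCDF u := by
  have hv' : 0 < ‖v‖ := norm_pos_iff.2 hv
  have hunit : {w | ⟪v, w⟫ ≤ ‖v‖ * u} = (fun w ↦ ⟪‖v‖⁻¹ • v, w⟫) ⁻¹' Set.Iic u := by
    ext w
    simp [real_inner_smul_left, inv_mul_le_iff₀ hv']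
  rw [hunit, ← map_measureReal_apply (by fun_prop) measurableSet_Iic, stdGaussian_map_inner,
    nnnorm_smul, nnnorm_inv, nnnorm_norm, inv_mul_cancel₀ (nnnorm_ne_zero_iff.2 hv), one_pow,
    ← cdf_eq_real, stdNormalCDF_eq_cdf]

lemma setIntegral_halfSpace_exp_inner_sub_stdGaussian {v : E} (hv : v ≠ 0) (u : ℝ) :
    ∫ w in {w | ⟪v, w⟫ ≤ ‖v‖ * u}, Real.exp (⟪v, w⟫ - ‖v‖ ^ 2 / 2) ∂stdGaussian E
      = stdNormalCDF (u - ‖v‖) := by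
  have hmeas (c : ℝ) : MeasurableSet {w : E | ⟪v, w⟫ ≤ c} :=
    measurableSet_le (by fun_prop) measurable_const
  calc ∫ w in {w | ⟪v, w⟫ ≤ ‖v‖ * u}, Real.exp (⟪v, w⟫ - ‖v‖ ^ 2 / 2) ∂stdGaussian E
    _ = ∫ w, {w | ⟪v, w⟫ ≤ ‖v‖ * u}.indicator (1 : E → ℝ) (w + v) ∂stdGaussian E := by
      rw [integral_comp_add_right_stdGaussian, ← integral_indicator (hmeas _)]
      congr 1 with w
      simp [Set.indicator_apply]
    _ = ∫ w, {w | ⟪v, w⟫ ≤ ‖v‖ * (u - ‖v‖)}.indicator (1 : E → ℝ) w ∂stdGaussian E := by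
      congr 1 with w
      have hiff : ⟪v, w + v⟫ ≤ ‖v‖ * u ↔ ⟪v, w⟫ ≤ ‖v‖ * (u - ‖v‖) := by
        rw [inner_add_right, real_inner_self_eq_norm_mul_norm, mul_sub, le_sub_iff_add_le]
      simp only [Set.indicator_apply, Set.mem_ofPred_eq, hiff, Pi.one_apply]
    _ = stdNormalCDF (u - ‖v‖) := by
      rw [integral_indicator_one (hmeas _), stdGaussian_real_halfSpace hv]

lemma stdNormalCDF_sub_norm_le_integral_comp_add_right {g : E → ℝ}
    (hg : AEStronglyMeasurable g (stdGaussian E))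
    (hg01 : ∀ᵐ w ∂stdGaussian E, g w ∈ Set.Icc (0 : ℝ) 1) {u : ℝ}
    (hu : stdNormalCDF u ≤ ∫ w, g w ∂stdGaussian E) (v : E) :
    stdNormalCDF (u - ‖v‖) ≤ ∫ w, g (w + v) ∂stdGaussian E := by
  rcases eq_or_ne v 0 with rfl | hv
  · simpa using hu
  rw [← setIntegral_halfSpace_exp_inner_sub_stdGaussian hv, integral_comp_add_right_stdGaussian]
  simp_rw [smul_eq_mul, mul_comm (Real.exp _)]
  refine setIntegral_le_integral_mul_of_likelihoodRatio_le (k := Real.exp (‖v‖ * u - ‖v‖ ^ 2 / 2))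
    hg hg01 (integrable_exp_inner_sub_stdGaussian v)
    (measurableSet_le (by fun_prop) measurable_const) (Real.exp_nonneg _) ?_ ?_
    ((stdGaussian_real_halfSpace hv u).trans_le hu)
  · intro w hw
    rw [Set.mem_ofPred_eq] at hw
    gcongr
  · intro w hw
    rw [Set.mem_ofPred_eq, not_le] at hw
    gcongr

end StdGaussian

section Smoothing

variable {E : Type*} [NormedAddCommGroup E] [InnerProductSpace ℝ E] [FiniteDimensional ℝ E]
  [MeasurableSpace E] [BorelSpace E]

lemma integral_comp_add_smul_stdGaussian {σ : ℝ} (hσ : σ ≠ 0) (f : E → ℝ) (x : E) :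
    ∫ w, f (x + σ • w) ∂stdGaussian E = ∫ z, f z *
      ((2 * Real.pi * σ ^ 2) ^ (-(Module.finrank ℝ E : ℝ) / 2) *
        Real.exp (-‖x - z‖ ^ 2 / (2 * σ ^ 2))) := by
  calc ∫ w, f (x + σ • w) ∂stdGaussian E
    _ = ∫ w, stdGaussianPDFReal (σ⁻¹ • σ • w) * f (x + σ • w) := by
      simp_rw [integral_stdGaussian_eq_integral_smul, inv_smul_smul₀ hσ, smul_eq_mul]
    _ = |(σ ^ Module.finrank ℝ E)⁻¹| * ∫ w, stdGaussianPDFReal (σ⁻¹ • w) * f (x + w) :=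
      Measure.integral_comp_smul volume (fun w ↦ stdGaussianPDFReal (σ⁻¹ • w) * f (x + w)) σ
    _ = |(σ ^ Module.finrank ℝ E)⁻¹| * ∫ z, stdGaussianPDFReal (σ⁻¹ • (z - x)) * f z := by
      rw [← integral_sub_right_eq_self _ x]
      simp_rw [add_sub_cancel]
    _ = _ := by
      rw [← integral_const_mul]
      congr 1 with z
      rw [← mul_assoc, abs_inv_pow_mul_stdGaussianPDFReal_inv_smul hσ, norm_sub_rev, mul_comm]

theorem smoothed_probit_lipschitz_general {σ : ℝ} (hσ : 0 < σ)
    {f : E → ℝ} (hf : Measurable f) (hf01 : ∀ z, f z ∈ Set.Icc (0 : ℝ) 1) {h : E → ℝ}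
    (hh : ∀ x, h x = ∫ z, f z *
      ((2 * Real.pi * σ ^ 2) ^ (-(Module.finrank ℝ E : ℝ) / 2) *
        Real.exp (-‖x - z‖ ^ 2 / (2 * σ ^ 2))))
    {x₁ x₂ : E} {u₁ u₂ : ℝ} (hu₁ : stdNormalCDF u₁ = h x₁) (hu₂ : stdNormalCDF u₂ = h x₂) :
    u₁ - u₂ ≤ ‖x₁ - x₂‖ / σ := by
  have hh_mean (x : E) : h x = ∫ w, f (x + σ • w) ∂stdGaussian E :=
    (hh x).trans (integral_comp_add_smul_stdGaussian hσ.ne' f x).symm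
  have hmean_translate :
      ∫ w, f (x₁ + σ • (w + σ⁻¹ • (x₂ - x₁))) ∂stdGaussian E = stdNormalCDF u₂ := by
    rw [hu₂, hh_mean]
    congr 1 with w
    rw [smul_add, smul_inv_smul₀ hσ.ne', add_comm (σ • w), ← add_assoc, add_sub_cancel]
  have hcdf : stdNormalCDF (u₁ - ‖σ⁻¹ • (x₂ - x₁)‖) ≤ stdNormalCDF u₂ :=
    hmean_translate ▸ stdNormalCDF_sub_norm_le_integral_comp_add_right (g := fun w ↦ f (x₁ + σ • w))
      (hf.comp (by fun_prop)).aestronglyMeasurable (.of_forall fun w ↦ hf01 _)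
      (hu₁.trans (hh_mean x₁)).le _
  rw [stdNormalCDF_strictMono.le_iff_le, norm_smul, norm_inv, Real.norm_of_nonneg hσ.le,
    norm_sub_rev, inv_mul_eq_div] at hcdf
  linarith

end Smoothing

/-- Lipschitz constant of the randomized-smoothing map: if `ĥ` is the Gaussian smoothing
of a measurable `f : ℝᵈ → [0,1]`, then `x ↦ σ · Φ⁻¹(ĥ(x))` is 1-Lipschitz. -/
theorem smoothed_probit_lipschitz (d : ℕ) (hd : 1 ≤ d) (σ : ℝ) (hσ : 0 < σ)
    (f : EuclideanSpace ℝ (Fin d) → ℝ) (hf : Measurable f)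
    (hf01 : ∀ z, f z ∈ Set.Icc (0 : ℝ) 1)
    (h : EuclideanSpace ℝ (Fin d) → ℝ)
    (hh : ∀ x, h x = ∫ z, f z *
      ((2 * Real.pi * σ ^ 2) ^ (-(d : ℝ) / 2) * Real.exp (-‖x - z‖ ^ 2 / (2 * σ ^ 2))))
    (x₁ x₂ : EuclideanSpace ℝ (Fin d)) (u₁ u₂ : ℝ)
    (hu₁ : stdNormalCDF u₁ = h x₁) (hu₂ : stdNormalCDF u₂ = h x₂) :
    u₁ - u₂ ≤ ‖x₁ - x₂‖ / σ :=
  smoothed_probit_lipschitz_general hσ hf hf01 (by simpa using hh) hu₁ hu₂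
end
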